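/- For every natural number k there exists a play of the reversible pebble game on 2^k nodes whose final configuration contains node 2^k, and in which every configuration of the play contains at most k + 1 pebbled nodes. -/

import Mathlib

/- Bennett's reversible pebble game on `t` nodes numbered `1, …, t`.
A configuration is a finite set `P` of pebbled node indices (a subset of
`{1, …, t}`).  A legal move toggles the pebbled status of exactly one node
`j` with `1 ≤ j ≤ t`, provided `j = 1` or node `j - 1` is pebbled. -/
def PebbleMove (t : ℕ) (P P' : Finset ℕ) : Prop :=
  ∃ j : ℕ, 1 ≤ j ∧ j ≤ t ∧ (j = 1 ∨ j - 1 ∈ P) ∧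
    P' = (if j ∈ P then P.erase j else insert j P)

/-- A play is a finite sequence of configurations beginning with the empty
configuration, each consecutive pair related by a legal move. -/
def PebblePlay (t : ℕ) (L : List (Finset ℕ)) : Prop :=
  L.head? = some ∅ ∧ L.Chain' (PebbleMove t)

/-!
Put a pebble `m + n` nodes ahead of a pebbled node by first pebbling the node `m` ahead, then
advancing from there by `n`, and finally running the first phase backwards: every move is
reversible, so this removes the intermediate pebble. It costs one pebble more than the dearer of
the two phases. Doubling the distance thus costs a single extra pebble, and `k` doublings from
distance `1` reach distance `2 ^ k` with `k + 1` pebbles.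
-/

theorem PebbleMove.symm {t : ℕ} {P Q : Finset ℕ} (h : PebbleMove t P Q) : PebbleMove t Q P := by
  obtain ⟨j, one_le, le_t, pred_mem, rfl⟩ := h
  refine ⟨j, one_le, le_t, pred_mem.imp_right fun pred_mem => ?_, ?_⟩
  · have pred_ne : j - 1 ≠ j := by omega
    split_ifs <;> simp [pred_ne, pred_mem]
  · by_cases hj : j ∈ P <;> simp [hj]

theorem PebbleMove.insert_succ {t a : ℕ} {P : Finset ℕ} (ha : a = 0 ∨ a ∈ P)
    (hP : a + 1 ∉ P) (ht : a + 1 ≤ t) : PebbleMove t P (insert (a + 1) P) :=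
  ⟨a + 1, by omega, ht, by simpa using ha, by simp [hP]⟩

/-- A legal move between two configurations of at most `c` pebbles each. Both ends are bounded so
that the relation is symmetric. -/
def BoundedPebbleMove (t c : ℕ) (P Q : Finset ℕ) : Prop :=
  PebbleMove t P Q ∧ P.card ≤ c ∧ Q.card ≤ c

/-- `Q` can be reached from `P` by legal moves through configurations of at most `c` pebbles.
For `P = Q` no move is needed, and then nothing bounds the size of `P`. -/
abbrev PebbleReachable (t c : ℕ) : Finset ℕ → Finset ℕ → Prop :=
  Relation.ReflTransGen (BoundedPebbleMove t c)

instance BoundedPebbleMove.stdSymm (t c : ℕ) : Std.Symm (BoundedPebbleMove t c) where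
  symm _ _ h := ⟨h.1.symm, h.2.2, h.2.1⟩

theorem PebbleReachable.symm {t c : ℕ} {P Q : Finset ℕ} (h : PebbleReachable t c P Q) :
    PebbleReachable t c Q P :=
  Std.Symm.symm P Q h

theorem PebbleReachable.exists_pebblePlay {t c : ℕ} {Q : Finset ℕ}
    (h : PebbleReachable t c ∅ Q) :
    ∃ L : List (Finset ℕ), PebblePlay t L ∧ L.getLast? = some Q ∧ ∀ P ∈ L, P.card ≤ c := by
  obtain ⟨L, chain, last_eq⟩ := List.exists_isChain_cons_of_relationReflTransGen h
  refine ⟨∅ :: L, ⟨rfl, chain.imp fun _ _ move => move.1⟩, ?_, ?_⟩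
  · rw [List.getLast?_eq_some_getLast (List.cons_ne_nil _ _), last_eq]
  · exact chain.induction (fun P => P.card ≤ c) _ (fun _ _ move _ => move.2.2) (by simp)

/-- Whenever a node `a` is pebbled and the `n` nodes after it are free, node `a + n` can be pebbled,
leaving all others as they were, with `r` pebbles beyond those already placed. The starting point
`a = 0` stands for the left end of the line, and counts as pebbled. -/
def PebbleAdvance (n r : ℕ) : Prop :=
  ∀ ⦃t c a : ℕ⦄ ⦃P : Finset ℕ⦄, (a = 0 ∨ a ∈ P) → Disjoint P (Finset.Ioc a (a + n)) →
    a + n ≤ t → P.card + r ≤ c → PebbleReachable t c P (insert (a + n) P)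

namespace PebbleAdvance

theorem one : PebbleAdvance 1 1 := by
  intro t c a P ha free ht hc
  have succ_notMem : a + 1 ∉ P := Finset.disjoint_right.1 free (by simp)
  refine .single ⟨.insert_succ ha succ_notMem ht, by omega, ?_⟩
  exact (Finset.card_insert_le _ _).trans hc

theorem add {m n r s : ℕ} (hm : PebbleAdvance m r) (hn : PebbleAdvance n s) (n_pos : 0 < n) :
    PebbleAdvance (m + n) (max r s + 1) := by
  intro t c a P ha free ht hc
  rw [← add_assoc] at free ht ⊢
  have card_insert (x : ℕ) : (insert x P).card ≤ P.card + 1 := Finset.card_insert_le x P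
  have free_left : Disjoint P (Finset.Ioc a (a + m)) :=
    free.mono_right (Finset.Ioc_subset_Ioc_right (by omega))
  have free_right : Disjoint P (Finset.Ioc (a + m) (a + m + n)) :=
    free.mono_right (Finset.Ioc_subset_Ioc_left (by omega))
  have place_middle : PebbleReachable t c P (insert (a + m) P) :=
    hm ha free_left (by omega) (by omega)
  have place_end :
      PebbleReachable t c (insert (a + m) P) (insert (a + m + n) (insert (a + m) P)) :=
    hn (by simp) (by simpa using free_right) ht (by have := card_insert (a + m); omega)
  have place_middle_below_end :
      PebbleReachable t c (insert (a + m + n) P) (insert (a + m) (insert (a + m + n) P)) :=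
    hm (ha.imp_right Finset.mem_insert_of_mem)
      (Finset.disjoint_insert_left.2 ⟨by simp only [Finset.mem_Ioc]; omega, free_left⟩)
      (by omega) (by have := card_insert (a + m + n); omega)
  rw [Finset.insert_comm] at place_middle_below_end
  exact (place_middle.trans place_end).trans place_middle_below_end.symm

theorem two_pow (k : ℕ) : PebbleAdvance (2 ^ k) (k + 1) := by
  induction k with
  | zero => exact one
  | succ k ih => simpa only [pow_succ, mul_two, max_self] using ih.add ih (by positivity)

end PebbleAdvance

/-- For every `k` there is a play of the reversible pebble game on `2 ^ k`
nodes whose final configuration contains node `2 ^ k`, and in which every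
configuration contains at most `k + 1` pebbled nodes. -/
theorem bennett_pebble_strategy (k : ℕ) :
    ∃ L : List (Finset ℕ), PebblePlay (2 ^ k) L ∧
      (∃ P : Finset ℕ, L.getLast? = some P ∧ 2 ^ k ∈ P) ∧
      ∀ P ∈ L, P.card ≤ k + 1 := by
  have reach : PebbleReachable (2 ^ k) (k + 1) ∅ {2 ^ k} := by
    simpa using PebbleAdvance.two_pow k (t := 2 ^ k) (c := k + 1) (a := 0) (P := ∅)
  obtain ⟨L, play, last_eq, card_le⟩ := reach.exists_pebblePlay
  exact ⟨L, play, ⟨_, last_eq, Finset.mem_singleton_self _⟩, card_le⟩
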